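/- arXiv:1908.11823 — 7 statements merged into one kernel-verified Lean document; each statement's English description precedes it below -/
import Mathlib

section
/- Let V be a set, l : {-1,1} × V → [0,∞) a loss function, and ψ : [0,1] → V a link function. Then the composite loss (l,ψ) is strictly proper and non-degenerate if and only if both (i) ψ(η) ∈ v*(η) for every η ∈ [0,1], and (ii) v*(η₁) ∩ v*(η₂) ∩ Im ψ = ∅ for all η₁, η₂ ∈ [0,1] with η₁ ≠ η₂. -/
open Set

/-- The conditional risk `L(η,v) = η·l(1,v) + (1−η)·l(−1,v)`, where `true` encodes label `1`
and `false` encodes label `−1`. -/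
def condRisk {V : Type*} (l : Bool → V → ℝ) (η : ℝ) (v : V) : ℝ :=
  η * l true v + (1 - η) * l false v

/-- `v*(η)`: the set of minimizers of `v ↦ L(η,v)` over `V`. -/
def minimizerSet {V : Type*} (l : Bool → V → ℝ) (η : ℝ) : Set V :=
  {v | ∀ w, condRisk l η v ≤ condRisk l η w}

/-- `v*_ψ(η)`: the set of minimizers over `[0,1]` of `q ↦ L(η, ψ q)`. -/
def compMinimizerSet {V : Type*} (l : Bool → V → ℝ) (ψ : ℝ → V) (η : ℝ) : Set ℝ :=
  {q ∈ Icc (0:ℝ) 1 | ∀ q' ∈ Icc (0:ℝ) 1, condRisk l η (ψ q) ≤ condRisk l η (ψ q')}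

/-- `(l,ψ)` is strictly proper: `v*_ψ(η) = {η}` for all `η ∈ [0,1]`. -/
def IsStrictlyProperComposite {V : Type*} (l : Bool → V → ℝ) (ψ : ℝ → V) : Prop :=
  ∀ η ∈ Icc (0:ℝ) 1, compMinimizerSet l ψ η = {η}

/-- `(l,ψ)` is non-degenerate: `Im ψ ∩ v*(η) ≠ ∅` for all `η ∈ [0,1]`. -/
def IsNonDegenerateComposite {V : Type*} (l : Bool → V → ℝ) (ψ : ℝ → V) : Prop :=
  ∀ η ∈ Icc (0:ℝ) 1, (ψ '' Icc (0:ℝ) 1 ∩ minimizerSet l η).Nonempty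

/-! If some minimizer of the risk `f` lies in the image of `ψ`, then the composite risk `f ∘ ψ`
attains the same minimum as `f`, so its minimizers are exactly the preimages under `ψ` of those of
`f`. Non-degeneracy and strict properness together therefore say that, within the parameter set, the
preimage of `v*(η)` under `ψ` is `{η}`: condition (i) puts `η` in it and condition (ii) keeps every
other point out. -/

/-- The set of minimizers over `s` of a function `f`, i.e. `argmin_{a ∈ s} f a`; it represents both
the minimizers of a risk over predictions and those of a composite risk over parameters. -/
def minimizersOn {α β : Type*} [LE β] (f : α → β) (s : Set α) : Set α :=
  {a ∈ s | ∀ b ∈ s, f a ≤ f b}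

section Minimizers

variable {ι V β : Type*} [Preorder β] {f : V → β} {ψ : ι → V} {S : Set ι} {T : Set V}

theorem minimizersOn_comp (hψ : MapsTo ψ S T) (h : (ψ '' S ∩ minimizersOn f T).Nonempty) :
    minimizersOn (f ∘ ψ) S = S ∩ ψ ⁻¹' minimizersOn f T := by
  obtain ⟨_, ⟨p, hp, rfl⟩, -, hp_min⟩ := h
  ext q
  constructor
  · rintro ⟨hq, hq_min⟩
    exact ⟨hq, hψ hq, fun w hw => (hq_min p hp).trans (hp_min w hw)⟩
  · rintro ⟨hq, -, hq_min⟩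
    exact ⟨hq, fun q' hq' => hq_min (ψ q') (hψ hq')⟩

theorem minimizersOn_comp_eq_singleton_and_nonempty_iff (hψ : MapsTo ψ S T) {η : ι} :
    (minimizersOn (f ∘ ψ) S = {η} ∧ (ψ '' S ∩ minimizersOn f T).Nonempty) ↔
      S ∩ ψ ⁻¹' minimizersOn f T = {η} := by
  constructor
  · rintro ⟨h_eq, h_nonempty⟩
    rwa [← minimizersOn_comp hψ h_nonempty]
  · intro h_eq
    have h_nonempty : (ψ '' S ∩ minimizersOn f T).Nonempty := by
      rw [← image_inter_preimage, h_eq]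
      exact (singleton_nonempty η).image ψ
    exact ⟨(minimizersOn_comp hψ h_nonempty).trans h_eq, h_nonempty⟩

end Minimizers

theorem forall_inter_preimage_eq_singleton_iff {ι V : Type*} {S : Set ι} {ψ : ι → V}
    {M : ι → Set V} :
    (∀ η ∈ S, S ∩ ψ ⁻¹' M η = {η}) ↔
      (∀ η ∈ S, ψ η ∈ M η) ∧
        ∀ η₁ ∈ S, ∀ η₂ ∈ S, η₁ ≠ η₂ → M η₁ ∩ M η₂ ∩ ψ '' S = ∅ := by
  constructor
  · intro h
    have eq_of_mem : ∀ η ∈ S, ∀ q ∈ S, ψ q ∈ M η → q = η :=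
      fun η hη q hq hqM => (h η hη).subset ⟨hq, hqM⟩
    refine ⟨fun η hη => ((h η hη).superset rfl).2, fun η₁ h₁ η₂ h₂ hne => ?_⟩
    rw [eq_empty_iff_forall_notMem]
    rintro _ ⟨⟨hM₁, hM₂⟩, q, hq, rfl⟩
    exact hne ((eq_of_mem η₁ h₁ q hq hM₁).symm.trans (eq_of_mem η₂ h₂ q hq hM₂))
  · rintro ⟨h_mem, h_disj⟩ η hη
    refine eq_singleton_iff_unique_mem.mpr ⟨⟨hη, h_mem η hη⟩, ?_⟩
    rintro q ⟨hq, hqM⟩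
    by_contra hne
    exact (h_disj q hq η hη hne).subset ⟨⟨h_mem q hq, hqM⟩, mem_image_of_mem ψ hq⟩

theorem strictlyProper_nondegenerate_iff_general
    {ι V β : Type*} [Preorder β] (R : ι → V → β) {ψ : ι → V} {S : Set ι} {T : Set V}
    (hψ : MapsTo ψ S T) :
    ((∀ η ∈ S, minimizersOn (R η ∘ ψ) S = {η}) ∧
        ∀ η ∈ S, (ψ '' S ∩ minimizersOn (R η) T).Nonempty) ↔
      ((∀ η ∈ S, ψ η ∈ minimizersOn (R η) T) ∧
        ∀ η₁ ∈ S, ∀ η₂ ∈ S, η₁ ≠ η₂ →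
          minimizersOn (R η₁) T ∩ minimizersOn (R η₂) T ∩ ψ '' S = ∅) := by
  rw [← forall_inter_preimage_eq_singleton_iff, ← forall₂_and]
  exact forall₂_congr fun _ _ => minimizersOn_comp_eq_singleton_and_nonempty_iff hψ

theorem minimizerSet_eq_minimizersOn_univ {V : Type*} (l : Bool → V → ℝ) (η : ℝ) :
    minimizerSet l η = minimizersOn (condRisk l η) univ := by
  simp only [minimizerSet, minimizersOn, mem_univ, true_and, true_imp_iff]

/-- Lemma 2: `(l,ψ)` is strictly proper and non-degenerate iff `ψ(η) ∈ v*(η)` for all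
`η ∈ [0,1]` and `v*(η₁) ∩ v*(η₂) ∩ Im ψ = ∅` for all distinct `η₁, η₂ ∈ [0,1]`. -/
theorem strictlyProper_nondegenerate_iff
    {V : Type*} (l : Bool → V → ℝ) (hl : ∀ y v, 0 ≤ l y v) (ψ : ℝ → V) :
    (IsStrictlyProperComposite l ψ ∧ IsNonDegenerateComposite l ψ) ↔
      ((∀ η ∈ Icc (0:ℝ) 1, ψ η ∈ minimizerSet l η) ∧
        ∀ η₁ ∈ Icc (0:ℝ) 1, ∀ η₂ ∈ Icc (0:ℝ) 1, η₁ ≠ η₂ →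
          minimizerSet l η₁ ∩ minimizerSet l η₂ ∩ ψ '' Icc (0:ℝ) 1 = ∅) := by
  simp only [IsNonDegenerateComposite, minimizerSet_eq_minimizersOn_univ]
  exact strictlyProper_nondegenerate_iff_general (condRisk l) (mapsTo_univ ψ (Icc 0 1))
end

section
/- Let (l,ψ) be a natural CPE loss on V with inverse link ψ⁻¹ : V → [0,1]. Let P be a probability measure on 𝒳 × {−1,1} with marginal P_X on 𝒳, let η : 𝒳 → [0,1] be a measurable version of the conditional probability x ↦ P(Y = 1 | X = x), and let ℱ be a class of measurable functions f : 𝒳 → V such that the risk R(f) = E_{(X,Y)∼P}[l(Y, f(X))] is finite for all f ∈ ℱ. Suppose f₀ ∈ ℱ attains the minimum of R over ℱ. Then ψ⁻¹(f₀(x)) = η(x) for P_X-almost every x if and only if there exists f ∈ ℱ with ψ⁻¹(f(x)) = η(x) for P_X-almost every x. -/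
open Set MeasureTheory

/-! Conditioning on the first coordinate writes the risk of `f` as the integral of the conditional
risk `L(η(x), f(x))` against `P_X`. A competitor `f` with `ψ⁻¹ ∘ f = η` a.e. minimizes this
integrand pointwise, so a risk minimizer `f₀`, whose integral is no larger, attains the same
pointwise minimum a.e.; since the sets `v*(η)` are disjoint, this forces `ψ⁻¹ ∘ f₀ = η` a.e. -/

section Slices

variable {𝒳 Y E : Type*} [MeasurableSpace 𝒳] [MeasurableSpace Y] [MeasurableSingletonClass Y]
  [NormedAddCommGroup E]

theorem comap_prodMk_right_apply (μ : Measure (𝒳 × Y)) (y : Y) (A : Set 𝒳) :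
    μ.comap (fun x => (x, y)) A = μ (A ×ˢ {y}) := by
  rw [(measurableEmbedding_prod_mk_right y).comap_apply, prod_singleton]

theorem integrable_comap_prodMk_right {μ : Measure (𝒳 × Y)} {g : 𝒳 × Y → E} (hg : Integrable g μ)
    (y : Y) : Integrable (fun x => g (x, y)) (μ.comap fun x => (x, y)) := by
  have embedding := measurableEmbedding_prod_mk_right (β := 𝒳) y
  rw [← Function.comp_def, ← embedding.integrable_map_iff, embedding.map_comap]
  exact hg.restrict

variable [Fintype Y]

theorem sum_map_comap_prodMk_right (μ : Measure (𝒳 × Y)) :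
    ∑ y, (μ.comap fun x => (x, y)).map (fun x => (x, y)) = μ := by
  have range_eq (y : Y) : range (fun x : 𝒳 => (x, y)) = Prod.snd ⁻¹' {y} := by
    ext ⟨x, z⟩
    simp [eq_comm]
  have disjoint_fibers :
      Pairwise (Function.onFun Disjoint fun y => (Prod.snd ⁻¹' {y} : Set (𝒳 × Y))) :=
    fun _ _ hne => (disjoint_singleton.2 hne).preimage _
  simp_rw [(measurableEmbedding_prod_mk_right _).map_comap, range_eq]
  rw [← Measure.sum_fintype, ← Measure.restrict_iUnion disjoint_fibers
    fun y => measurable_snd (measurableSet_singleton y), ← preimage_iUnion, iUnion_of_singleton,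
    preimage_univ, Measure.restrict_univ]

theorem sum_comap_prodMk_right (μ : Measure (𝒳 × Y)) :
    ∑ y, μ.comap (fun x => (x, y)) = μ.map Prod.fst := by
  conv_rhs => rw [← sum_map_comap_prodMk_right μ]
  rw [Measure.map_finset_sum measurable_fst.aemeasurable]
  simp_rw [Measure.map_map measurable_fst measurable_prodMk_right, Function.comp_def,
    Measure.map_id']

theorem integral_eq_sum_integral_comap_prodMk_right [NormedSpace ℝ E] {μ : Measure (𝒳 × Y)}
    {g : 𝒳 × Y → E} (hg : Integrable g μ) :
    ∫ p, g p ∂μ = ∑ y, ∫ x, g (x, y) ∂(μ.comap fun x => (x, y)) := by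
  have embedding (y : Y) := measurableEmbedding_prod_mk_right (β := 𝒳) y
  have hg_map (y : Y) : Integrable g ((μ.comap fun x => (x, y)).map fun x => (x, y)) :=
    (embedding y).integrable_map_iff.2 (integrable_comap_prodMk_right hg y)
  conv_lhs => rw [← sum_map_comap_prodMk_right μ]
  rw [integral_finsetSum_measure fun y _ => hg_map y]
  simp_rw [(embedding _).integral_map]

end Slices

section RealDensity

variable {𝒳 E : Type*} [MeasurableSpace 𝒳] [NormedAddCommGroup E] [NormedSpace ℝ E]
  {ν : Measure 𝒳} {w : 𝒳 → ℝ}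

theorem integrable_withDensity_ofReal_iff (hw : Measurable w) (hw_nonneg : ∀ x, 0 ≤ w x)
    {g : 𝒳 → E} :
    Integrable g (ν.withDensity fun x => ENNReal.ofReal (w x)) ↔
      Integrable (fun x => w x • g x) ν := by
  rw [integrable_withDensity_iff_integrable_smul' hw.ennreal_ofReal (by simp)]
  simp_rw [ENNReal.toReal_ofReal (hw_nonneg _)]

theorem integral_withDensity_ofReal (hw : Measurable w) (hw_nonneg : ∀ x, 0 ≤ w x)
    (g : 𝒳 → E) :
    ∫ x, g x ∂(ν.withDensity fun x => ENNReal.ofReal (w x)) = ∫ x, w x • g x ∂ν := by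
  rw [integral_withDensity_eq_integral_toReal_smul hw.ennreal_ofReal (by simp)]
  simp_rw [ENNReal.toReal_ofReal (hw_nonneg _)]

theorem withDensity_ofReal_add_withDensity_ofReal_one_sub (ν : Measure 𝒳) (hw : Measurable w)
    (hw_mem : ∀ x, w x ∈ Icc (0 : ℝ) 1) :
    (ν.withDensity fun x => ENNReal.ofReal (w x)) +
      (ν.withDensity fun x => ENNReal.ofReal (1 - w x)) = ν := by
  have add_eq_one (x : 𝒳) : ENNReal.ofReal (w x) + ENNReal.ofReal (1 - w x) = 1 := by
    rw [← ENNReal.ofReal_add (hw_mem x).1 (sub_nonneg.2 (hw_mem x).2), add_sub_cancel,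
      ENNReal.ofReal_one]
  rw [← withDensity_add_left hw.ennreal_ofReal]
  simp_rw [Pi.add_def, add_eq_one]
  exact withDensity_one

end RealDensity

/-- The probability of each label when `true` has probability `p`. -/
def labelProb (p : ℝ) : Bool → ℝ
  | true => p
  | false => 1 - p

theorem labelProb_nonneg {p : ℝ} (hp : p ∈ Icc (0 : ℝ) 1) (y : Bool) : 0 ≤ labelProb p y := by
  cases y
  · exact sub_nonneg.2 hp.2
  · exact hp.1

theorem condRisk_eq_sum_labelProb {V : Type*} (l : Bool → V → ℝ) (p : ℝ) (v : V) :
    condRisk l p v = ∑ y, labelProb p y • l y v := by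
  simp [condRisk, labelProb]

/-- `η` is a measurable version, with values in `[0,1]`, of the class probability
`x ↦ P(Y = 1 | X = x)` for `(X,Y) ∼ μ`, the label `1` being encoded as `true`. -/
structure IsPosterior {𝒳 : Type*} [MeasurableSpace 𝒳] (μ : Measure (𝒳 × Bool)) (η : 𝒳 → ℝ) :
    Prop where
  measurable : Measurable η
  mem_Icc : ∀ x, η x ∈ Icc (0 : ℝ) 1
  toReal_measure_prod_true : ∀ A : Set 𝒳, MeasurableSet A →
    (μ (A ×ˢ ({true} : Set Bool))).toReal = ∫ x in A, η x ∂(μ.map Prod.fst)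

namespace IsPosterior

variable {𝒳 V : Type*} [MeasurableSpace 𝒳] {μ : Measure (𝒳 × Bool)} {η : 𝒳 → ℝ}

theorem measurable_labelProb (hη : IsPosterior μ η) (y : Bool) :
    Measurable fun x => labelProb (η x) y := by
  cases y
  · exact measurable_const.sub hη.measurable
  · exact hη.measurable

variable [IsFiniteMeasure μ]

theorem integrable (hη : IsPosterior μ η) : Integrable η (μ.map Prod.fst) :=
  .of_mem_Icc 0 1 hη.measurable.aemeasurable (.of_forall hη.mem_Icc)

theorem comap_true_eq_withDensity (hη : IsPosterior μ η) :
    μ.comap (fun x => (x, true)) =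
      (μ.map Prod.fst).withDensity fun x => ENNReal.ofReal (η x) := by
  ext A hA
  rw [comap_prodMk_right_apply, withDensity_apply _ hA,
    ← ofReal_integral_eq_lintegral_ofReal hη.integrable.integrableOn
      (.of_forall fun x => (hη.mem_Icc x).1),
    ← hη.toReal_measure_prod_true A hA, ENNReal.ofReal_toReal (measure_ne_top _ _)]

theorem comap_false_eq_withDensity (hη : IsPosterior μ η) :
    μ.comap (fun x => (x, false)) =
      (μ.map Prod.fst).withDensity fun x => ENNReal.ofReal (1 - η x) := by
  rw [← Measure.add_right_inj (μ.comap fun x => (x, true))]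
  conv_rhs =>
    rw [hη.comap_true_eq_withDensity,
      withDensity_ofReal_add_withDensity_ofReal_one_sub _ hη.measurable hη.mem_Icc]
  rw [← sum_comap_prodMk_right, Fintype.sum_bool]

theorem comap_eq_withDensity_labelProb (hη : IsPosterior μ η) (y : Bool) :
    μ.comap (fun x => (x, y)) =
      (μ.map Prod.fst).withDensity fun x => ENNReal.ofReal (labelProb (η x) y) := by
  cases y
  · exact hη.comap_false_eq_withDensity
  · exact hη.comap_true_eq_withDensity

theorem integrable_labelProb_smul {E : Type*} [NormedAddCommGroup E] [NormedSpace ℝ E]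
    (hη : IsPosterior μ η) {g : 𝒳 × Bool → E} (hg : Integrable g μ) (y : Bool) :
    Integrable (fun x => labelProb (η x) y • g (x, y)) (μ.map Prod.fst) := by
  rw [← integrable_withDensity_ofReal_iff (hη.measurable_labelProb y)
    fun x => labelProb_nonneg (hη.mem_Icc x) y, ← hη.comap_eq_withDensity_labelProb]
  exact integrable_comap_prodMk_right hg y

theorem integral_eq_integral_sum_labelProb_smul {E : Type*} [NormedAddCommGroup E]
    [NormedSpace ℝ E] (hη : IsPosterior μ η) {g : 𝒳 × Bool → E} (hg : Integrable g μ) :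
    ∫ p, g p ∂μ = ∫ x, ∑ y, labelProb (η x) y • g (x, y) ∂(μ.map Prod.fst) := by
  rw [integral_eq_sum_integral_comap_prodMk_right hg,
    integral_finsetSum _ fun y _ => hη.integrable_labelProb_smul hg y]
  refine Finset.sum_congr rfl fun y _ => ?_
  rw [hη.comap_eq_withDensity_labelProb, integral_withDensity_ofReal (hη.measurable_labelProb y)
    fun x => labelProb_nonneg (hη.mem_Icc x) y]

variable {l : Bool → V → ℝ} {f : 𝒳 → V}

theorem integrable_condRisk (hη : IsPosterior μ η)
    (hf : Integrable (fun p : 𝒳 × Bool => l p.2 (f p.1)) μ) :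
    Integrable (fun x => condRisk l (η x) (f x)) (μ.map Prod.fst) := by
  simp_rw [condRisk_eq_sum_labelProb]
  exact integrable_finsetSum _ fun y _ => hη.integrable_labelProb_smul hf y

theorem integral_loss_eq_integral_condRisk (hη : IsPosterior μ η)
    (hf : Integrable (fun p : 𝒳 × Bool => l p.2 (f p.1)) μ) :
    ∫ p : 𝒳 × Bool, l p.2 (f p.1) ∂μ = ∫ x, condRisk l (η x) (f x) ∂(μ.map Prod.fst) := by
  simp_rw [condRisk_eq_sum_labelProb]
  exact hη.integral_eq_integral_sum_labelProb_smul hf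

end IsPosterior

theorem ae_mem_minimizerSet_of_integral_condRisk_le {𝒳 V : Type*} [MeasurableSpace 𝒳]
    {ν : Measure 𝒳} {l : Bool → V → ℝ} {η : 𝒳 → ℝ} {f g : 𝒳 → V}
    (hf : Integrable (fun x => condRisk l (η x) (f x)) ν)
    (hg : Integrable (fun x => condRisk l (η x) (g x)) ν)
    (hf_mem : ∀ᵐ x ∂ν, f x ∈ minimizerSet l (η x))
    (hle : ∫ x, condRisk l (η x) (g x) ∂ν ≤ ∫ x, condRisk l (η x) (f x) ∂ν) :
    ∀ᵐ x ∂ν, g x ∈ minimizerSet l (η x) := by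
  have f_le_g : (fun x => condRisk l (η x) (f x)) ≤ᵐ[ν] fun x => condRisk l (η x) (g x) :=
    hf_mem.mono fun x hx => hx (g x)
  have f_eq_g : (fun x => condRisk l (η x) (f x)) =ᵐ[ν] fun x => condRisk l (η x) (g x) :=
    (integral_eq_iff_of_ae_le hf hg f_le_g).1 (le_antisymm (integral_mono_ae hf hg f_le_g) hle)
  filter_upwards [hf_mem, f_eq_g] with x hx heq
  exact fun w => heq.ge.trans (hx w)

theorem invLink_eq_iff_mem_minimizerSet {V : Type*} {l : Bool → V → ℝ} {ψinv : V → ℝ}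
    (hdisj : ∀ η₁ ∈ Icc (0 : ℝ) 1, ∀ η₂ ∈ Icc (0 : ℝ) 1, η₁ ≠ η₂ →
      minimizerSet l η₁ ∩ minimizerSet l η₂ = ∅)
    (hψinv : ∀ v : V, ψinv v ∈ Icc (0 : ℝ) 1 ∧ v ∈ minimizerSet l (ψinv v))
    {p : ℝ} (hp : p ∈ Icc (0 : ℝ) 1) {v : V} :
    ψinv v = p ↔ v ∈ minimizerSet l p := by
  refine ⟨fun h => h ▸ (hψinv v).2, fun hv => ?_⟩
  by_contra hne
  exact (hdisj _ (hψinv v).1 p hp hne).subset ⟨(hψinv v).2, hv⟩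

theorem true_risk_minimizer_recovers_posterior_iff_general
    {𝒳 V : Type*} [MeasurableSpace 𝒳] (l : Bool → V → ℝ)
    (hdisj : ∀ η₁ ∈ Icc (0 : ℝ) 1, ∀ η₂ ∈ Icc (0 : ℝ) 1, η₁ ≠ η₂ →
      minimizerSet l η₁ ∩ minimizerSet l η₂ = ∅)
    (ψinv : V → ℝ)
    (hψinv : ∀ v : V, ψinv v ∈ Icc (0 : ℝ) 1 ∧ v ∈ minimizerSet l (ψinv v))
    (μ : Measure (𝒳 × Bool)) [IsFiniteMeasure μ] {η : 𝒳 → ℝ} (hη : IsPosterior μ η)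
    (F : Set (𝒳 → V))
    (hFint : ∀ f ∈ F, Integrable (fun p : 𝒳 × Bool => l p.2 (f p.1)) μ)
    (f₀ : 𝒳 → V) (hf₀ : f₀ ∈ F)
    (hmin : ∀ f ∈ F, ∫ p : 𝒳 × Bool, l p.2 (f₀ p.1) ∂μ ≤ ∫ p : 𝒳 × Bool, l p.2 (f p.1) ∂μ) :
    (∀ᵐ x ∂(μ.map Prod.fst), ψinv (f₀ x) = η x) ↔
      ∃ f ∈ F, ∀ᵐ x ∂(μ.map Prod.fst), ψinv (f x) = η x := by
  simp_rw [invLink_eq_iff_mem_minimizerSet hdisj hψinv (hη.mem_Icc _)]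
  refine ⟨fun h => ⟨f₀, hf₀, h⟩, fun ⟨f, hf, hf_mem⟩ => ?_⟩
  have condRisk_le : ∫ x, condRisk l (η x) (f₀ x) ∂(μ.map Prod.fst) ≤
      ∫ x, condRisk l (η x) (f x) ∂(μ.map Prod.fst) := by
    rw [← hη.integral_loss_eq_integral_condRisk (hFint f₀ hf₀),
      ← hη.integral_loss_eq_integral_condRisk (hFint f hf)]
    exact hmin f hf
  exact ae_mem_minimizerSet_of_integral_condRisk_le (hη.integrable_condRisk (hFint f hf))
    (hη.integrable_condRisk (hFint f₀ hf₀)) hf_mem condRisk_le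

/-- Theorem 1 (retrieving the posterior with the true risk minimizer). Let `(l,ψ)` be a natural
CPE loss with inverse link `ψinv`. Let `μ` be a probability measure on `𝒳 × {−1,1}`, `η` a
measurable version of `x ↦ P(Y = 1 | X = x)`, and `F` a class of measurable functions with
finite risk, with `f₀ ∈ F` a risk minimizer. Then `ψinv ∘ f₀ = η` a.e. `[P_X]` iff some
`f ∈ F` satisfies `ψinv ∘ f = η` a.e. `[P_X]`. -/
theorem true_risk_minimizer_recovers_posterior_iff
    {𝒳 V : Type*} [MeasurableSpace 𝒳] [MeasurableSpace V]
    (l : Bool → V → ℝ) (hl : ∀ y v, 0 ≤ l y v) (ψ : ℝ → V)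
    -- natural CPE loss: strictly proper, non-degenerate, disjoint cover
    (hstrict : ∀ η ∈ Icc (0:ℝ) 1, compMinimizerSet l ψ η = {η})
    (hnondeg : ∀ η ∈ Icc (0:ℝ) 1, (ψ '' Icc (0:ℝ) 1 ∩ minimizerSet l η).Nonempty)
    (hcover : (⋃ η ∈ Icc (0:ℝ) 1, minimizerSet l η) = univ)
    (hdisj : ∀ η₁ ∈ Icc (0:ℝ) 1, ∀ η₂ ∈ Icc (0:ℝ) 1, η₁ ≠ η₂ →
      minimizerSet l η₁ ∩ minimizerSet l η₂ = ∅)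
    -- the inverse link ψ⁻¹ : V → [0,1], mapping v to the unique η with v ∈ v*(η)
    (ψinv : V → ℝ)
    (hψinv : ∀ v : V, ψinv v ∈ Icc (0:ℝ) 1 ∧ v ∈ minimizerSet l (ψinv v))
    -- the distribution and a measurable version of the class probability
    (μ : Measure (𝒳 × Bool)) [IsProbabilityMeasure μ]
    (η : 𝒳 → ℝ) (hηm : Measurable η) (hηr : ∀ x, η x ∈ Icc (0:ℝ) 1)
    (hηcond : ∀ A : Set 𝒳, MeasurableSet A →
      (μ (A ×ˢ ({true} : Set Bool))).toReal = ∫ x in A, η x ∂(μ.map Prod.fst))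
    -- the hypothesis class: measurable functions with finite risk
    (F : Set (𝒳 → V)) (hFmeas : ∀ f ∈ F, Measurable f)
    (hFint : ∀ f ∈ F, Integrable (fun p : 𝒳 × Bool => l p.2 (f p.1)) μ)
    -- f₀ attains the minimum of the risk over F
    (f₀ : 𝒳 → V) (hf₀ : f₀ ∈ F)
    (hmin : ∀ f ∈ F, ∫ p : 𝒳 × Bool, l p.2 (f₀ p.1) ∂μ ≤ ∫ p : 𝒳 × Bool, l p.2 (f p.1) ∂μ) :
    (∀ᵐ x ∂(μ.map Prod.fst), ψinv (f₀ x) = η x) ↔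
      ∃ f ∈ F, ∀ᵐ x ∂(μ.map Prod.fst), ψinv (f x) = η x :=
  true_risk_minimizer_recovers_posterior_iff_general l hdisj ψinv hψinv μ
    ⟨hηm, hηr, hηcond⟩ F hFint f₀ hf₀ hmin
end

section
/- Let V be a set, l : {-1,1} × V → [0,∞) a loss, and ψ : [0,1] → V a link such that the partial composite losses q ↦ l(1,ψ(q)) and q ↦ l(−1,ψ(q)) are continuous on [0,1], and such that for every η ∈ [0,1] the map q ↦ L_ψ(η,q) is strictly decreasing on [0,η] and strictly increasing on [η,1]. Then for every ε > 0 there exists δ = δ(ε) > 0 such that for all η, η̂ ∈ [0,1]: if ΔL_ψ(η,η̂) < δ then |η − η̂| < ε. -/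
open Set

/-- The conditional risk of the composite loss:
`L_ψ(η,q) = η·l(1,ψ(q)) + (1−η)·l(−1,ψ(q))`, with `true` encoding label `1`. -/
def condRiskComp {V : Type*} (l : Bool → V → ℝ) (ψ : ℝ → V) (η q : ℝ) : ℝ :=
  η * l true (ψ q) + (1 - η) * l false (ψ q)

/-!
Write `D(η, q) = L(η, q) - L(η, η)` for the excess risk. Since `L(·, q)` is affine,

`(v - u) * ((L(η, v) - L(η, u)) - D(u, v)) = (u - η) * (D(u, v) + D(v, u))`,

so as soon as the true probability is an optimal report, `D(u, v) ≤ D(η, q)` whenever `η, u, v, q`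
occur in this order, or in the reverse order. If `|η - q| ≥ ε`, then `u ≠ v` can be picked from a
finite net depending only on `ε`, and `δ` is the least of the finitely many positive numbers
`D(u, v)`.
-/

open Topology

section

variable {V : Type*}

/-- The conditional excess risk `ΔL_ψ(η,q)` of a composite loss, with `L_ψ(η,η)` in the role of
the minimal conditional risk; this is the excess over the minimum when the loss is strictly
proper. -/
def excessRisk (l : Bool → V → ℝ) (ψ : ℝ → V) (η q : ℝ) : ℝ :=
  condRiskComp l ψ η q - condRiskComp l ψ η η

/-- Strict properness of a composite loss on a set `s` of probabilities: among all reports in `s`,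
the true probability is the unique minimiser of the conditional risk. -/
def IsStrictlyProperOn (l : Bool → V → ℝ) (ψ : ℝ → V) (s : Set ℝ) : Prop :=
  ∀ ⦃η⦄, η ∈ s → ∀ ⦃q⦄, q ∈ s → η ≠ q → condRiskComp l ψ η η < condRiskComp l ψ η q

variable {l : Bool → V → ℝ} {ψ : ℝ → V} {s : Set ℝ} {η q u v : ℝ}

theorem isStrictlyProperOn_Icc_of_strictAntiOn_of_strictMonoOn {a b : ℝ}
    (hanti : ∀ η ∈ Icc a b, StrictAntiOn (condRiskComp l ψ η) (Icc a η))
    (hmono : ∀ η ∈ Icc a b, StrictMonoOn (condRiskComp l ψ η) (Icc η b)) :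
    IsStrictlyProperOn l ψ (Icc a b) := by
  intro η hη q hq hne
  rcases hne.lt_or_gt with hlt | hgt
  · exact hmono η hη (left_mem_Icc.2 hη.2) ⟨hlt.le, hq.2⟩ hlt
  · exact hanti η hη ⟨hq.1, hgt.le⟩ (right_mem_Icc.2 hη.1) hgt

theorem sub_mul_condRiskComp_sub_sub_excessRisk (l : Bool → V → ℝ) (ψ : ℝ → V) (η u v : ℝ) :
    (v - u) * (condRiskComp l ψ η v - condRiskComp l ψ η u - excessRisk l ψ u v) =
      (u - η) * (excessRisk l ψ u v + excessRisk l ψ v u) := by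
  unfold excessRisk condRiskComp
  ring

namespace IsStrictlyProperOn

theorem excessRisk_pos (h : IsStrictlyProperOn l ψ s) (hη : η ∈ s) (hq : q ∈ s) (hne : η ≠ q) :
    0 < excessRisk l ψ η q :=
  sub_pos.2 (h hη hq hne)

theorem excessRisk_nonneg (h : IsStrictlyProperOn l ψ s) (hη : η ∈ s) (hq : q ∈ s) :
    0 ≤ excessRisk l ψ η q := by
  rcases eq_or_ne η q with rfl | hne
  · exact (sub_self _).ge
  · exact (h.excessRisk_pos hη hq hne).le

theorem excessRisk_le_condRiskComp_sub (h : IsStrictlyProperOn l ψ s) (hu : u ∈ s) (hv : v ∈ s)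
    (hbtw : u ∈ uIcc η v) :
    excessRisk l ψ u v ≤ condRiskComp l ψ η v - condRiskComp l ψ η u := by
  have hsum : 0 ≤ excessRisk l ψ u v + excessRisk l ψ v u :=
    add_nonneg (h.excessRisk_nonneg hu hv) (h.excessRisk_nonneg hv hu)
  have hid := sub_mul_condRiskComp_sub_sub_excessRisk l ψ η u v
  rcases eq_or_ne u v with rfl | hne
  · simp [excessRisk]
  rw [← sub_nonneg]
  rcases mem_uIcc.1 hbtw with ⟨hηu, huv⟩ | ⟨hvu, huη⟩
  · refine nonneg_of_mul_nonneg_right ?_ (sub_pos.2 (huv.lt_of_ne hne))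
    exact hid ▸ mul_nonneg (sub_nonneg.2 hηu) hsum
  · refine nonneg_of_mul_nonpos_right ?_ (sub_neg.2 (hvu.lt_of_ne hne.symm))
    exact hid ▸ mul_nonpos_of_nonpos_of_nonneg (sub_nonpos.2 huη) hsum

theorem excessRisk_le_excessRisk_left (h : IsStrictlyProperOn l ψ s) (hη : η ∈ s) (hu : u ∈ s)
    (hv : v ∈ s) (hbtw : u ∈ uIcc η v) : excessRisk l ψ u v ≤ excessRisk l ψ η v :=
  calc
    excessRisk l ψ u v ≤ condRiskComp l ψ η v - condRiskComp l ψ η u :=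
      h.excessRisk_le_condRiskComp_sub hu hv hbtw
    _ ≤ excessRisk l ψ η v :=
      sub_le_sub_left (sub_nonneg.1 (h.excessRisk_nonneg hη hu)) _

theorem excessRisk_le_excessRisk_right (h : IsStrictlyProperOn l ψ s) (hv : v ∈ s) (hq : q ∈ s)
    (hbtw : v ∈ uIcc η q) : excessRisk l ψ η v ≤ excessRisk l ψ η q := by
  have hrisk : condRiskComp l ψ η v ≤ condRiskComp l ψ η q :=
    sub_nonneg.1 ((h.excessRisk_nonneg hv hq).trans (h.excessRisk_le_condRiskComp_sub hv hq hbtw))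
  exact sub_le_sub_right hrisk _

theorem excessRisk_le_excessRisk (h : IsStrictlyProperOn l ψ s) (hη : η ∈ s) (hq : q ∈ s)
    (hu : u ∈ s) (hv : v ∈ s) (huv : u ∈ uIcc η v) (hvq : v ∈ uIcc η q) :
    excessRisk l ψ u v ≤ excessRisk l ψ η q :=
  (h.excessRisk_le_excessRisk_left hη hu hv huv).trans
    (h.excessRisk_le_excessRisk_right hv hq hvq)

theorem exists_pos_forall_le_excessRisk (h : IsStrictlyProperOn l ψ s) {t : Set ℝ}
    (ht : t.Finite) (hts : t ⊆ s) :
    ∃ δ > 0, ∀ u ∈ t, ∀ v ∈ t, u ≠ v → δ ≤ excessRisk l ψ u v := by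
  have hsmall : ∀ᶠ δ in 𝓝[>] (0 : ℝ), ∀ p ∈ t.offDiag, δ ≤ excessRisk l ψ p.1 p.2 :=
    (Filter.eventually_all_finite ht.offDiag).2 fun p hp ↦
      (eventually_le_nhds (h.excessRisk_pos (hts hp.1) (hts hp.2.1) hp.2.2)).filter_mono
        nhdsWithin_le_nhds
  obtain ⟨δ, hδ, hδpos⟩ := (hsmall.and self_mem_nhdsWithin).exists
  exact ⟨δ, hδpos, fun u hu v hv hne ↦ hδ (u, v) ⟨hu, hv, hne⟩⟩

end IsStrictlyProperOn

theorem exists_finite_subset_forall_exists_lt_between (hs : s.OrdConnected)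
    (hbdd : Bornology.IsBounded s) {ε : ℝ} (hε : 0 < ε) :
    ∃ t ⊆ s, t.Finite ∧ ∀ x ∈ s, ∀ y ∈ s, x + ε ≤ y →
      ∃ u ∈ t, ∃ v ∈ t, x ≤ u ∧ u < v ∧ v ≤ y := by
  obtain ⟨t, hts, htfin, hcover⟩ :=
    Metric.finite_approx_of_totallyBounded
      (hbdd.isCompact_closure.totallyBounded.subset subset_closure) (ε / 4) (by positivity)
  have happrox : ∀ z ∈ s, ∃ w ∈ t, |z - w| < ε / 4 := fun z hz ↦ by
    simpa [Real.dist_eq] using hcover hz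
  refine ⟨t, hts, htfin, fun x hx y hy hxy ↦ ?_⟩
  obtain ⟨u, hut, hu⟩ := happrox (x + ε / 4) (hs.out hx hy ⟨by linarith, by linarith⟩)
  obtain ⟨v, hvt, hv⟩ := happrox (y - ε / 4) (hs.out hx hy ⟨by linarith, by linarith⟩)
  rw [abs_lt] at hu hv
  exact ⟨u, hut, v, hvt, by linarith, by linarith, by linarith⟩

theorem exists_finite_subset_forall_exists_ne_mem_uIcc (hs : s.OrdConnected)
    (hbdd : Bornology.IsBounded s) {ε : ℝ} (hε : 0 < ε) :
    ∃ t ⊆ s, t.Finite ∧ ∀ x ∈ s, ∀ y ∈ s, ε ≤ |x - y| →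
      ∃ u ∈ t, ∃ v ∈ t, u ≠ v ∧ u ∈ uIcc x v ∧ v ∈ uIcc x y := by
  obtain ⟨t, hts, htfin, hnet⟩ := exists_finite_subset_forall_exists_lt_between hs hbdd hε
  refine ⟨t, hts, htfin, fun x hx y hy hfar ↦ ?_⟩
  rcases le_abs'.1 hfar with hxy | hyx
  · obtain ⟨u, hu, v, hv, hxu, huv, hvy⟩ := hnet x hx y hy (by linarith)
    exact ⟨u, hu, v, hv, huv.ne, mem_uIcc_of_le hxu huv.le,
      mem_uIcc_of_le (hxu.trans huv.le) hvy⟩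
  · obtain ⟨v, hv, u, hu, hyv, hvu, hux⟩ := hnet y hy x hx (by linarith)
    exact ⟨u, hu, v, hv, hvu.ne', mem_uIcc_of_ge hvu.le hux,
      mem_uIcc_of_ge hyv (hvu.le.trans hux)⟩

theorem small_excess_risk_implies_close_probability_general (h : IsStrictlyProperOn l ψ s)
    (hs : s.OrdConnected) (hbdd : Bornology.IsBounded s) :
    ∀ ε > 0, ∃ δ > 0, ∀ η ∈ s, ∀ q ∈ s, excessRisk l ψ η q < δ → |η - q| < ε := by
  intro ε hε
  obtain ⟨t, hts, htfin, hnet⟩ := exists_finite_subset_forall_exists_ne_mem_uIcc hs hbdd hε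
  obtain ⟨δ, hδpos, hδ⟩ := h.exists_pos_forall_le_excessRisk htfin hts
  refine ⟨δ, hδpos, fun η hη q hq hlt ↦ ?_⟩
  by_contra! hfar
  obtain ⟨u, hu, v, hv, hne, huv, hvq⟩ := hnet η hη q hq hfar
  refine hlt.not_ge ?_
  calc
    δ ≤ excessRisk l ψ u v := hδ u hu v hv hne
    _ ≤ excessRisk l ψ η q := h.excessRisk_le_excessRisk hη hq (hts hu) (hts hv) huv hvq

end

/-- Lemma (Probineq): if the partial composite losses are continuous on `[0,1]` and for every
`η ∈ [0,1]` the conditional risk `q ↦ L_ψ(η,q)` is strictly decreasing on `[0,η]` and strictly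
increasing on `[η,1]` (so its minimum over `[0,1]` is attained at `q = η` and
`ΔL_ψ(η,q) = L_ψ(η,q) − L_ψ(η,η)`), then for every `ε > 0` there is `δ > 0` such that for all
`η, η̂ ∈ [0,1]`, `ΔL_ψ(η,η̂) < δ` implies `|η − η̂| < ε`. -/
theorem small_excess_risk_implies_close_probability
    {V : Type*} (l : Bool → V → ℝ) (hl : ∀ y v, 0 ≤ l y v) (ψ : ℝ → V)
    (hcont1 : ContinuousOn (fun q => l true (ψ q)) (Icc (0:ℝ) 1))
    (hcont2 : ContinuousOn (fun q => l false (ψ q)) (Icc (0:ℝ) 1))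
    (hmono : ∀ η ∈ Icc (0:ℝ) 1,
      StrictAntiOn (fun q => condRiskComp l ψ η q) (Icc (0:ℝ) η) ∧
      StrictMonoOn (fun q => condRiskComp l ψ η q) (Icc η 1)) :
    ∀ ε > 0, ∃ δ > 0, ∀ η ∈ Icc (0:ℝ) 1, ∀ η' ∈ Icc (0:ℝ) 1,
      condRiskComp l ψ η η' - condRiskComp l ψ η η < δ → |η - η'| < ε :=
  small_excess_risk_implies_close_probability_general
    (isStrictlyProperOn_Icc_of_strictAntiOn_of_strictMonoOn
      (fun η hη ↦ (hmono η hη).1) (fun η hη ↦ (hmono η hη).2))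
    ordConnected_Icc (Metric.isBounded_Icc 0 1)
end

section
/- Let V be a set, l : {-1,1} × V → [0,∞) a loss, and ψ : [0,1] → V a link such that q ↦ l(1,ψ(q)) and q ↦ l(−1,ψ(q)) are continuous on [0,1] and, for every η ∈ [0,1], q ↦ L_ψ(η,q) is strictly decreasing on [0,η] and strictly increasing on [η,1]. Let P be a probability measure on 𝒳 × {−1,1} with marginal P_X and let η : 𝒳 → [0,1] be a measurable version of x ↦ P(Y = 1 | X = x). If (η̂_n)_{n∈ℕ} is a sequence of measurable functions 𝒳 → [0,1] with E_{X∼P_X}[ΔL_ψ(η(X), η̂_n(X))] → 0 as n → ∞, then η̂_n(X) converges to η(X) in probability (for every ε > 0, P_X(|η(X) − η̂_n(X)| > ε) → 0) and in L¹ (E_{X∼P_X}|η(X) − η̂_n(X)| → 0). -/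
/-!
On the compact square `[0,1]²` the excess risk `ΔL_ψ` is continuous and vanishes only on the
diagonal, so it is bounded below by a positive constant on `{|a - q| ≥ ε}`. Since `|a - q|` is
bounded there, for every `ε > 0` there is a constant `C` with `|a - q| ≤ ε + C · ΔL_ψ(a, q)` on the
square. Integrating this bound and letting first `n → ∞` and then `ε → 0` yields `L¹` convergence;
convergence in probability follows by Markov's inequality.
-/

open Set MeasureTheory Filter

theorem exists_forall_le_add_mul_of_isCompact {α : Type*} [TopologicalSpace α] {K : Set α}
    {f g : α → ℝ} (hK : IsCompact K) (hf : UpperSemicontinuousOn f K)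
    (hg : LowerSemicontinuousOn g K) (hg_nonneg : ∀ x ∈ K, 0 ≤ g x)
    (hg_pos : ∀ x ∈ K, 0 < f x → 0 < g x) {ε : ℝ} (hε : 0 < ε) :
    ∃ C, ∀ x ∈ K, f x ≤ ε + C * g x := by
  obtain ⟨M, hM⟩ := hf.bddAbove_of_isCompact hK
  obtain ⟨δ, hδ, hδg⟩ : ∃ δ > 0, ∀ x ∈ K, ε ≤ f x → δ ≤ g x := by
    rcases (K ∩ f ⁻¹' Ici ε).eq_empty_or_nonempty with hempty | hne
    · exact ⟨1, one_pos, fun x hx hεx => (hempty.le ⟨hx, hεx⟩).elim⟩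
    · obtain ⟨x₀, hx₀, hmin⟩ := (hg.mono inter_subset_left).exists_isMinOn hne
        (hf.isCompact_inter_preimage_Ici hK ε)
      exact ⟨g x₀, hg_pos x₀ hx₀.1 (hε.trans_le hx₀.2), fun x hx hεx => hmin ⟨hx, hεx⟩⟩
  refine ⟨|M| / δ, fun x hx => ?_⟩
  rcases lt_or_ge (f x) ε with hlt | hge
  · exact hlt.le.trans (le_add_of_nonneg_right (mul_nonneg (by positivity) (hg_nonneg x hx)))
  · calc
      f x ≤ |M| := (hM (mem_image_of_mem f hx)).trans (le_abs_self M)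
      _ = |M| / δ * δ := (div_mul_cancel₀ _ hδ.ne').symm
      _ ≤ |M| / δ * g x := mul_le_mul_of_nonneg_left (hδg x hx hge) (by positivity)
      _ ≤ ε + |M| / δ * g x := le_add_of_nonneg_left hε.le

section Integral

variable {Ω ι : Type*} [MeasurableSpace Ω] {ν : Measure Ω} {𝓁 : Filter ι} {f : ι → Ω → ℝ}

theorem tendsto_integral_zero_of_forall_le_add_mul [IsFiniteMeasure ν] {g : ι → Ω → ℝ}
    (hf_nonneg : ∀ i, 0 ≤ᵐ[ν] f i) (hf : ∀ i, Integrable (f i) ν) (hg : ∀ i, Integrable (g i) ν)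
    (hle : ∀ ε > 0, ∃ C : ℝ, ∀ i, ∀ᵐ x ∂ν, f i x ≤ ε + C * g i x)
    (hlim : Tendsto (fun i => ∫ x, g i x ∂ν) 𝓁 (nhds 0)) :
    Tendsto (fun i => ∫ x, f i x ∂ν) 𝓁 (nhds 0) := by
  refine tendsto_order.2 ⟨fun b hb => Eventually.of_forall fun i =>
    hb.trans_le (integral_nonneg_of_ae (hf_nonneg i)), fun b hb => ?_⟩
  obtain ⟨ε, hε, hεb⟩ := exists_pos_mul_lt hb (ν.real univ)
  obtain ⟨C, hC⟩ := hle ε hε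
  have hbound (i : ι) : ∫ x, f i x ∂ν ≤ ν.real univ * ε + C * ∫ x, g i x ∂ν := calc
    ∫ x, f i x ∂ν ≤ ∫ x, (ε + C * g i x) ∂ν :=
      integral_mono_ae (hf i) ((integrable_const ε).add ((hg i).const_mul C)) (hC i)
    _ = ν.real univ * ε + C * ∫ x, g i x ∂ν := by
      rw [integral_add (integrable_const ε) ((hg i).const_mul C), integral_const,
        integral_const_mul, smul_eq_mul]
  have hbound_lim : Tendsto (fun i => ν.real univ * ε + C * ∫ x, g i x ∂ν) 𝓁
      (nhds (ν.real univ * ε)) := by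
    simpa using (hlim.const_mul C).const_add (ν.real univ * ε)
  filter_upwards [hbound_lim.eventually_lt_const hεb] with i hi
  exact (hbound i).trans_lt hi

theorem tendsto_measureReal_lt_of_tendsto_integral_zero
    (hf_nonneg : ∀ i, 0 ≤ᵐ[ν] f i) (hf : ∀ i, Integrable (f i) ν)
    (hlim : Tendsto (fun i => ∫ x, f i x ∂ν) 𝓁 (nhds 0)) {ε : ℝ} (hε : 0 < ε) :
    Tendsto (fun i => ν.real {x | ε < f i x}) 𝓁 (nhds 0) := by
  refine squeeze_zero (fun i => measureReal_nonneg) (fun i => ?_)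
    (by simpa using hlim.div_const ε)
  rw [le_div_iff₀' hε]
  calc
    ε * ν.real {x | ε < f i x} ≤ ε * ν.real {x | ε ≤ f i x} :=
      mul_le_mul_of_nonneg_left
        (measureReal_mono (fun x (hx : ε < f i x) => hx.le) ((hf i).measure_ge_lt_top hε).ne) hε.le
    _ ≤ ∫ x, f i x ∂ν := mul_meas_ge_le_integral_of_nonneg (hf_nonneg i) (hf i) ε

end Integral

section CompositeLoss

variable {V : Type*} {l : Bool → V → ℝ} {ψ : ℝ → V}

/-- The conditional excess risk `ΔL_ψ(η,q) = L_ψ(η,q) − L_ψ(η,η)`: the increase in conditional risk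
from predicting `q` when the true probability of label `1` is `η`. -/
def condExcessRisk (l : Bool → V → ℝ) (ψ : ℝ → V) (η q : ℝ) : ℝ :=
  condRiskComp l ψ η q - condRiskComp l ψ η η

/-- A composite loss is strictly proper if, for each `η ∈ [0,1]`, predicting `η` itself is the
unique minimizer of the conditional risk `q ↦ L_ψ(η,q)` over `[0,1]`. -/
def StrictlyProper (l : Bool → V → ℝ) (ψ : ℝ → V) : Prop :=
  ∀ η ∈ Icc (0 : ℝ) 1, ∀ q ∈ Icc (0 : ℝ) 1, q ≠ η → condRiskComp l ψ η η < condRiskComp l ψ η q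

theorem strictlyProper_of_strictAntiOn_of_strictMonoOn
    (hanti : ∀ η ∈ Icc (0 : ℝ) 1, StrictAntiOn (condRiskComp l ψ η) (Icc 0 η))
    (hmono : ∀ η ∈ Icc (0 : ℝ) 1, StrictMonoOn (condRiskComp l ψ η) (Icc η 1)) :
    StrictlyProper l ψ := by
  intro η hη q hq hne
  rcases hne.lt_or_gt with hlt | hgt
  · exact hanti η hη ⟨hq.1, hlt.le⟩ (right_mem_Icc.2 hη.1) hlt
  · exact hmono η hη (left_mem_Icc.2 hη.2) ⟨hgt.le, hq.2⟩ hgt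

theorem StrictlyProper.condExcessRisk_pos (h : StrictlyProper l ψ) {η q : ℝ}
    (hη : η ∈ Icc (0 : ℝ) 1) (hq : q ∈ Icc (0 : ℝ) 1) (hne : q ≠ η) :
    0 < condExcessRisk l ψ η q :=
  sub_pos.2 (h η hη q hq hne)

theorem StrictlyProper.condExcessRisk_nonneg (h : StrictlyProper l ψ) {η q : ℝ}
    (hη : η ∈ Icc (0 : ℝ) 1) (hq : q ∈ Icc (0 : ℝ) 1) : 0 ≤ condExcessRisk l ψ η q := by
  rcases eq_or_ne q η with rfl | hne
  · exact (sub_self _).ge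
  · exact (h.condExcessRisk_pos hη hq hne).le

theorem continuousOn_condRiskComp {s : Set ℝ} (hcont : ∀ y, ContinuousOn (fun q => l y (ψ q)) s) :
    ContinuousOn (fun p : ℝ × ℝ => condRiskComp l ψ p.1 p.2) (univ ×ˢ s) := by
  have hloss (y : Bool) : ContinuousOn (fun p : ℝ × ℝ => l y (ψ p.2)) (univ ×ˢ s) :=
    (hcont y).comp continuousOn_snd fun _ hp => hp.2
  exact (continuousOn_fst.mul (hloss true)).add
    ((continuousOn_const.sub continuousOn_fst).mul (hloss false))

theorem continuousOn_condExcessRisk {s : Set ℝ}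
    (hcont : ∀ y, ContinuousOn (fun q => l y (ψ q)) s) :
    ContinuousOn (fun p : ℝ × ℝ => condExcessRisk l ψ p.1 p.2) (s ×ˢ s) := by
  have hrisk := continuousOn_condRiskComp hcont
  have hdiag : ContinuousOn (fun p : ℝ × ℝ => condRiskComp l ψ p.1 p.1) (s ×ˢ s) :=
    hrisk.comp (f := fun p : ℝ × ℝ => (p.1, p.1)) (by fun_prop) fun _ hp => ⟨mem_univ _, hp.1⟩
  exact (hrisk.mono (prod_mono_left (subset_univ s))).sub hdiag

theorem StrictlyProper.exists_abs_sub_le_add_mul_condExcessRisk (h : StrictlyProper l ψ)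
    (hcont : ∀ y, ContinuousOn (fun q => l y (ψ q)) (Icc (0 : ℝ) 1)) {ε : ℝ} (hε : 0 < ε) :
    ∃ C, ∀ η ∈ Icc (0 : ℝ) 1, ∀ q ∈ Icc (0 : ℝ) 1,
      |η - q| ≤ ε + C * condExcessRisk l ψ η q := by
  have hdist : Continuous fun p : ℝ × ℝ => |p.1 - p.2| := by fun_prop
  obtain ⟨C, hC⟩ := exists_forall_le_add_mul_of_isCompact (isCompact_Icc.prod isCompact_Icc)
    hdist.continuousOn.upperSemicontinuousOn
    (continuousOn_condExcessRisk hcont).lowerSemicontinuousOn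
    (fun p hp => h.condExcessRisk_nonneg hp.1 hp.2)
    (fun p hp hpos => h.condExcessRisk_pos hp.1 hp.2 (sub_ne_zero.1 (abs_pos.1 hpos)).symm) hε
  exact ⟨C, fun η hη q hq => hC (η, q) ⟨hη, hq⟩⟩

end CompositeLoss

theorem vanishing_excess_risk_implies_convergence_general
    {𝒳 V ι : Type*} [MeasurableSpace 𝒳] {𝓁 : Filter ι} {l : Bool → V → ℝ} {ψ : ℝ → V}
    (hcont : ∀ y, ContinuousOn (fun q => l y (ψ q)) (Icc (0 : ℝ) 1)) (hl : StrictlyProper l ψ)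
    {ν : Measure 𝒳} [IsFiniteMeasure ν] {η : 𝒳 → ℝ} (hη : AEMeasurable η ν)
    (hη_mem : ∀ᵐ x ∂ν, η x ∈ Icc (0 : ℝ) 1) {ηhat : ι → 𝒳 → ℝ}
    (hηhat : ∀ i, AEMeasurable (ηhat i) ν) (hηhat_mem : ∀ i, ∀ᵐ x ∂ν, ηhat i x ∈ Icc (0 : ℝ) 1)
    (hint : ∀ i, Integrable (fun x => condExcessRisk l ψ (η x) (ηhat i x)) ν)
    (hlim : Tendsto (fun i => ∫ x, condExcessRisk l ψ (η x) (ηhat i x) ∂ν) 𝓁 (nhds 0)) :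
    (∀ ε > 0, Tendsto (fun i => ν.real {x | ε < |η x - ηhat i x|}) 𝓁 (nhds 0)) ∧
      Tendsto (fun i => ∫ x, |η x - ηhat i x| ∂ν) 𝓁 (nhds 0) := by
  have hnonneg (i : ι) : 0 ≤ᵐ[ν] fun x => |η x - ηhat i x| := ae_of_all _ fun x => abs_nonneg _
  have hintegrable (i : ι) : Integrable (fun x => |η x - ηhat i x|) ν :=
    ((Integrable.of_mem_Icc 0 1 hη hη_mem).sub
      (Integrable.of_mem_Icc 0 1 (hηhat i) (hηhat_mem i))).abs
  have hL1 : Tendsto (fun i => ∫ x, |η x - ηhat i x| ∂ν) 𝓁 (nhds 0) := by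
    refine tendsto_integral_zero_of_forall_le_add_mul hnonneg hintegrable hint (fun ε hε => ?_) hlim
    obtain ⟨C, hC⟩ := hl.exists_abs_sub_le_add_mul_condExcessRisk hcont hε
    refine ⟨C, fun i => ?_⟩
    filter_upwards [hη_mem, hηhat_mem i] with x hηx hηhatx using hC _ hηx _ hηhatx
  exact ⟨fun ε hε =>
    tendsto_measureReal_lt_of_tendsto_integral_zero hnonneg hintegrable hL1 hε, hL1⟩

/-- If the partial composite losses are continuous on `[0,1]`, the conditional risk
`q ↦ L_ψ(η,q)` is strictly decreasing on `[0,η]` and strictly increasing on `[η,1]` for every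
`η ∈ [0,1]`, and the expected conditional excess risk of a sequence of probability estimates
`η̂_n` tends to `0`, then `η̂_n(X) → η(X)` in probability and in `L¹`. -/
theorem vanishing_excess_risk_implies_convergence
    {𝒳 V : Type*} [MeasurableSpace 𝒳]
    (l : Bool → V → ℝ) (hl : ∀ y v, 0 ≤ l y v) (ψ : ℝ → V)
    (hcont1 : ContinuousOn (fun q => l true (ψ q)) (Icc (0:ℝ) 1))
    (hcont2 : ContinuousOn (fun q => l false (ψ q)) (Icc (0:ℝ) 1))
    (hmono : ∀ η ∈ Icc (0:ℝ) 1,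
      StrictAntiOn (fun q => condRiskComp l ψ η q) (Icc (0:ℝ) η) ∧
      StrictMonoOn (fun q => condRiskComp l ψ η q) (Icc η 1))
    (μ : Measure (𝒳 × Bool)) [IsProbabilityMeasure μ]
    (η : 𝒳 → ℝ) (hηm : Measurable η) (hηr : ∀ x, η x ∈ Icc (0:ℝ) 1)
    (hηcond : ∀ A : Set 𝒳, MeasurableSet A →
      (μ (A ×ˢ ({true} : Set Bool))).toReal = ∫ x in A, η x ∂(μ.map Prod.fst))
    (ηhat : ℕ → 𝒳 → ℝ) (hηhatm : ∀ n, Measurable (ηhat n))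
    (hηhatr : ∀ n x, ηhat n x ∈ Icc (0:ℝ) 1)
    (hInt : ∀ n, Integrable
      (fun x => condRiskComp l ψ (η x) (ηhat n x) - condRiskComp l ψ (η x) (η x))
      (μ.map Prod.fst))
    (hconv : Tendsto
      (fun n => ∫ x, (condRiskComp l ψ (η x) (ηhat n x) - condRiskComp l ψ (η x) (η x))
        ∂(μ.map Prod.fst)) atTop (nhds 0)) :
    (∀ ε > 0, Tendsto
        (fun n => ((μ.map Prod.fst) {x | ε < |η x - ηhat n x|}).toReal) atTop (nhds 0)) ∧
      Tendsto (fun n => ∫ x, |η x - ηhat n x| ∂(μ.map Prod.fst)) atTop (nhds 0) := by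
  exact vanishing_excess_risk_implies_convergence_general (Bool.forall_bool.2 ⟨hcont2, hcont1⟩)
    (strictlyProper_of_strictAntiOn_of_strictMonoOn (fun a ha => (hmono a ha).1)
      fun a ha => (hmono a ha).2)
    hηm.aemeasurable (ae_of_all _ hηr) (fun n => (hηhatm n).aemeasurable)
    (fun n => ae_of_all _ (hηhatr n)) hInt hconv
end

section
/- The constant 1/2 in the inequality (x − y)² ≤ c·( x·ln(x/y) + (1−x)·ln((1−x)/(1−y)) ) is optimal: for every c < 1/2 there exist x, y ∈ (0,1) such that (x − y)² > c·( x·ln(x/y) + (1−x)·ln((1−x)/(1−y)) ). -/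
/-!
For fixed `x`, the divergence `klBin x y` vanishes at `y = x` and has `y`-derivative
`(y - x) / (y (1 - y))`, so by L'Hôpital's rule `klBin x y / (x - y)²` tends to
`1 / (2 x (1 - x))` as `y → x`. This limit is least at `x = 1/2`, where it equals `2`; hence
`(x - y)² / klBin x y` comes arbitrarily close to `1/2`.
-/

open Set

/-- The binary Kullback–Leibler divergence `x·ln(x/y) + (1−x)·ln((1−x)/(1−y))`, which is the
conditional excess risk `ΔL(x,y)` of the logistic CPE loss. -/
noncomputable def klBin (x y : ℝ) : ℝ :=
  x * Real.log (x / y) + (1 - x) * Real.log ((1 - x) / (1 - y))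

open Filter Topology

theorem klBin_self (x : ℝ) : klBin x x = 0 := by
  simp only [klBin, Real.log_div_self, mul_zero, add_zero]

theorem klBin_eq_sub_binEntropy (x : ℝ) {y : ℝ} (hy₀ : y ≠ 0) (hy₁ : y ≠ 1) :
    klBin x y = -(x * Real.log y) - (1 - x) * Real.log (1 - y) - Real.binEntropy x := by
  have mul_log_div (a : ℝ) {b : ℝ} (hb : b ≠ 0) :
      a * Real.log (a / b) = a * Real.log a - a * Real.log b := by
    rcases eq_or_ne a 0 with rfl | ha
    · simp
    · rw [Real.log_div ha hb, mul_sub]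
  rw [klBin, mul_log_div x hy₀, mul_log_div (1 - x) (sub_ne_zero.2 hy₁.symm), Real.binEntropy,
    Real.log_inv, Real.log_inv]
  ring

theorem hasDerivAt_klBin (x : ℝ) {y : ℝ} (hy₀ : y ≠ 0) (hy₁ : y ≠ 1) :
    HasDerivAt (klBin x) ((y - x) / (y * (1 - y))) y := by
  have hy₁' : 1 - y ≠ 0 := sub_ne_zero.2 hy₁.symm
  have hlog : HasDerivAt (fun z ↦ x * Real.log z) (x * y⁻¹) y :=
    (Real.hasDerivAt_log hy₀).const_mul x
  have hlog_sub : HasDerivAt (fun z ↦ (1 - x) * Real.log (1 - z)) ((1 - x) * (-1 / (1 - y))) y :=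
    (((hasDerivAt_id y).const_sub 1).log hy₁').const_mul (1 - x)
  have hcross := (hlog.neg.sub hlog_sub).sub_const (Real.binEntropy x)
  have hkl : klBin x =ᶠ[𝓝 y] fun z ↦
      -(x * Real.log z) - (1 - x) * Real.log (1 - z) - Real.binEntropy x := by
    filter_upwards [eventually_ne_nhds hy₀, eventually_ne_nhds hy₁] with z hz₀ hz₁
    exact klBin_eq_sub_binEntropy x hz₀ hz₁
  refine (hcross.congr_of_eventuallyEq hkl).congr_deriv ?_
  field_simp
  ring

theorem tendsto_klBin_div_sq_sub {x : ℝ} (hx₀ : x ≠ 0) (hx₁ : x ≠ 1) :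
    Tendsto (fun y ↦ klBin x y / (x - y) ^ 2) (𝓝[≠] x) (𝓝 (1 / (2 * (x * (1 - x))))) := by
  have hnum : ∀ᶠ y in 𝓝[≠] x, HasDerivAt (klBin x) ((y - x) / (y * (1 - y))) y := by
    filter_upwards [(eventually_ne_nhds hx₀).filter_mono nhdsWithin_le_nhds,
      (eventually_ne_nhds hx₁).filter_mono nhdsWithin_le_nhds] with y hy₀ hy₁
    exact hasDerivAt_klBin x hy₀ hy₁
  have hden (y : ℝ) : HasDerivAt (fun z ↦ (x - z) ^ 2) (2 * (y - x)) y :=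
    (((hasDerivAt_id y).const_sub x).fun_pow 2).congr_deriv (by simp only [id]; ring)
  have hden_ne : ∀ᶠ y in 𝓝[≠] x, 2 * (y - x) ≠ 0 := by
    filter_upwards [self_mem_nhdsWithin] with y hy
    exact mul_ne_zero two_ne_zero (sub_ne_zero.2 hy)
  have hnum_zero : Tendsto (klBin x) (𝓝[≠] x) (𝓝 0) := by
    simpa only [klBin_self] using
      (hasDerivAt_klBin x hx₀ hx₁).continuousAt.continuousWithinAt.tendsto
  have hden_zero : Tendsto (fun y ↦ (x - y) ^ 2) (𝓝[≠] x) (𝓝 0) := by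
    simpa using (hden x).continuousAt.continuousWithinAt.tendsto
  have hratio : Tendsto (fun y ↦ (y - x) / (y * (1 - y)) / (2 * (y - x))) (𝓝[≠] x)
      (𝓝 (1 / (2 * (x * (1 - x))))) := by
    have hcont : ContinuousAt (fun y ↦ 1 / (2 * (y * (1 - y)))) x :=
      ContinuousAt.div (by fun_prop) (by fun_prop)
        (mul_ne_zero two_ne_zero (mul_ne_zero hx₀ (sub_ne_zero.2 hx₁.symm)))
    refine (hcont.tendsto.mono_left nhdsWithin_le_nhds).congr' ?_
    filter_upwards [self_mem_nhdsWithin] with y hy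
    field_simp [sub_ne_zero.2 hy]
  exact HasDerivAt.lhopital_zero_nhdsNE hnum (.of_forall hden) hden_ne hnum_zero hden_zero hratio

theorem eventually_mul_klBin_lt_sq_sub {c x : ℝ} (hx : x ∈ Ioo (0 : ℝ) 1)
    (hc : c < 2 * (x * (1 - x))) : ∀ᶠ y in 𝓝[≠] x, c * klBin x y < (x - y) ^ 2 := by
  have hvar : 0 < 2 * (x * (1 - x)) := mul_pos two_pos (mul_pos hx.1 (sub_pos.2 hx.2))
  have hlim : c * (1 / (2 * (x * (1 - x)))) < 1 := by rwa [mul_one_div, div_lt_one hvar]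
  have hratio := (tendsto_klBin_div_sq_sub hx.1.ne' hx.2.ne).const_mul c
  filter_upwards [hratio.eventually_lt_const hlim, self_mem_nhdsWithin] with y hlt hne
  have hsq : 0 < (x - y) ^ 2 := sq_pos_of_ne_zero (sub_ne_zero.2 (Ne.symm hne))
  rwa [← mul_div_assoc, div_lt_one hsq] at hlt

/-- Optimality of the constant `1/2` in the binary Pinsker-type inequality
`(x − y)² ≤ c·ΔL(x,y)`: for every `c < 1/2` there exist `x, y ∈ (0,1)` with
`(x − y)² > c·ΔL(x,y)`. -/
theorem half_is_optimal_constant :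
    ∀ c : ℝ, c < 1/2 →
      ∃ x ∈ Ioo (0:ℝ) 1, ∃ y ∈ Ioo (0:ℝ) 1, c * klBin x y < (x - y)^2 := by
  intro c hc
  have hhalf : (1 / 2 : ℝ) ∈ Ioo 0 1 := by norm_num
  have hkl : ∀ᶠ y in 𝓝[≠] (1 / 2 : ℝ), c * klBin (1 / 2) y < (1 / 2 - y) ^ 2 :=
    eventually_mul_klBin_lt_sq_sub hhalf (hc.trans_eq (by norm_num))
  have hmem : ∀ᶠ y in 𝓝[≠] (1 / 2 : ℝ), y ∈ Ioo (0 : ℝ) 1 :=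
    nhdsWithin_le_nhds (Ioo_mem_nhds hhalf.1 hhalf.2)
  obtain ⟨y, hy, hlt⟩ := (hmem.and hkl).exists
  exact ⟨1 / 2, hhalf, y, hy, hlt⟩
end

section
/- Let l be the hinge loss on V = ℝ, given by l(y,v) = max(0, 1 − yv). Then there exists no link function ψ : [0,1] → ℝ such that the composite loss (l,ψ) is strictly proper and non-degenerate. -/
open Set

/-- The conditional risk of the hinge loss `l(y,v) = max(0, 1 − yv)`:
`L(η,v) = η·max(0,1−v) + (1−η)·max(0,1+v)`. -/
def hingeCondRisk (η v : ℝ) : ℝ :=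
  η * max 0 (1 - v) + (1 - η) * max 0 (1 + v)

/-- `v*(η)`: the set of minimizers of `v ↦ L(η,v)` over `ℝ` for the hinge loss. -/
def hingeMinimizerSet (η : ℝ) : Set ℝ :=
  {v | ∀ w, hingeCondRisk η v ≤ hingeCondRisk η w}

/-!
For `1/2 < η < 1` the conditional hinge risk `L(η,·)` strictly decreases up to `1` and strictly
increases after it, so on each side of `1` all these `η` rank predictions in the same order. Strict
properness makes `η` and `η'` each strictly prefer its own prediction, so `ψ η` and `ψ η'` lie on
opposite sides of `1`, which is impossible for three probabilities at once.
-/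

/-- The composite loss with conditional risk `L` and link `ψ` is strictly proper:
`v*_ψ(η) = {η}` for all `η ∈ [0,1]`. A link `[0,1] → V` is encoded by a function on `ℝ`, of which
only the values on `[0,1]` matter. -/
def IsStrictlyProperLink {V : Type*} (L : ℝ → V → ℝ) (ψ : ℝ → V) : Prop :=
  ∀ η ∈ Icc (0 : ℝ) 1, {q ∈ Icc (0 : ℝ) 1 | ∀ q' ∈ Icc (0 : ℝ) 1, L η (ψ q) ≤ L η (ψ q')} = {η}

namespace IsStrictlyProperLink

theorem lt {V : Type*} {L : ℝ → V → ℝ} {ψ : ℝ → V} (h : IsStrictlyProperLink L ψ) {η q : ℝ}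
    (hη : η ∈ Icc (0 : ℝ) 1) (hq : q ∈ Icc (0 : ℝ) 1) (hne : η ≠ q) :
    L η (ψ η) < L η (ψ q) := by
  have η_minimizes : ∀ q' ∈ Icc (0 : ℝ) 1, L η (ψ η) ≤ L η (ψ q') :=
    ((h η hη).ge (mem_singleton η)).2
  by_contra! hle
  have q_minimizes : ∀ q' ∈ Icc (0 : ℝ) 1, L η (ψ q) ≤ L η (ψ q') :=
    fun q' hq' ↦ hle.trans (η_minimizes q' hq')
  exact hne ((h η hη).le ⟨hq, q_minimizes⟩).symm

variable {V : Type*} [LinearOrder V] {L : ℝ → V → ℝ} {ψ : ℝ → V} {p q : ℝ} {s : Set V}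

theorem notMem_of_strictMonoOn (h : IsStrictlyProperLink L ψ) (hp : p ∈ Icc (0 : ℝ) 1)
    (hq : q ∈ Icc (0 : ℝ) 1) (hpq : p ≠ q) (hLp : StrictMonoOn (L p) s)
    (hLq : StrictMonoOn (L q) s) (hps : ψ p ∈ s) : ψ q ∉ s := by
  intro hqs
  have p_lt_q : ψ p < ψ q := (hLp.lt_iff_lt hps hqs).1 (h.lt hp hq hpq)
  have q_lt_p : ψ q < ψ p := (hLq.lt_iff_lt hqs hps).1 (h.lt hq hp hpq.symm)
  exact p_lt_q.asymm q_lt_p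

theorem notMem_of_strictAntiOn (h : IsStrictlyProperLink L ψ) (hp : p ∈ Icc (0 : ℝ) 1)
    (hq : q ∈ Icc (0 : ℝ) 1) (hpq : p ≠ q) (hLp : StrictAntiOn (L p) s)
    (hLq : StrictAntiOn (L q) s) (hps : ψ p ∈ s) : ψ q ∉ s :=
  notMem_of_strictMonoOn (V := Vᵒᵈ) h hp hq hpq hLp.dual_left hLq.dual_left hps

theorem le_iff_lt_of_strictAntiOn_of_strictMonoOn (h : IsStrictlyProperLink L ψ)
    (hp : p ∈ Icc (0 : ℝ) 1) (hq : q ∈ Icc (0 : ℝ) 1) (hpq : p ≠ q) {c : V}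
    (hp_anti : StrictAntiOn (L p) (Iic c)) (hp_mono : StrictMonoOn (L p) (Ici c))
    (hq_anti : StrictAntiOn (L q) (Iic c)) (hq_mono : StrictMonoOn (L q) (Ici c)) :
    ψ p ≤ c ↔ c < ψ q := by
  constructor
  · intro hpc
    exact not_le.1 (h.notMem_of_strictAntiOn hp hq hpq hp_anti hq_anti hpc)
  · intro hcq
    exact (not_le.1 (h.notMem_of_strictMonoOn hq hp hpq.symm hq_mono hp_mono hcq.le)).le

end IsStrictlyProperLink

theorem strictAntiOn_hingeCondRisk {η : ℝ} (hη : 1 / 2 < η) :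
    StrictAntiOn (hingeCondRisk η) (Iic 1) := by
  have anti_left : StrictAntiOn (hingeCondRisk η) (Iic (-1)) := by
    intro v hv w hw hvw
    rw [mem_Iic] at hv hw
    simp only [hingeCondRisk, max_eq_right (show 0 ≤ 1 - v by linarith),
      max_eq_right (show 0 ≤ 1 - w by linarith), max_eq_left (show 1 + v ≤ 0 by linarith),
      max_eq_left (show 1 + w ≤ 0 by linarith)]
    nlinarith
  have anti_middle : StrictAntiOn (hingeCondRisk η) (Icc (-1) 1) := by
    intro v hv w hw hvw
    rw [mem_Icc] at hv hw
    simp only [hingeCondRisk, max_eq_right (show 0 ≤ 1 - v by linarith),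
      max_eq_right (show 0 ≤ 1 - w by linarith), max_eq_right (show 0 ≤ 1 + v by linarith),
      max_eq_right (show 0 ≤ 1 + w by linarith)]
    nlinarith
  have hunion : Iic (-1 : ℝ) ∪ Icc (-1) 1 = Iic 1 := Iic_union_Icc_eq_Iic (by norm_num)
  rw [← hunion]
  exact anti_left.union anti_middle isGreatest_Iic (isLeast_Icc (by norm_num))

theorem strictMonoOn_hingeCondRisk {η : ℝ} (hη : η < 1) :
    StrictMonoOn (hingeCondRisk η) (Ici 1) := by
  intro v hv w hw hvw
  rw [mem_Ici] at hv hw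
  simp only [hingeCondRisk, max_eq_left (show 1 - v ≤ 0 by linarith),
    max_eq_left (show 1 - w ≤ 0 by linarith), max_eq_right (show 0 ≤ 1 + v by linarith),
    max_eq_right (show 0 ≤ 1 + w by linarith)]
  nlinarith

theorem hinge_no_strictly_proper_link_general :
    ¬ ∃ ψ : ℝ → ℝ, IsStrictlyProperLink hingeCondRisk ψ := by
  rintro ⟨ψ, hψ⟩
  have opposite_sides {p q : ℝ} (hp : p ∈ Ioo (1 / 2) 1) (hq : q ∈ Ioo (1 / 2) 1)
      (hpq : p ≠ q) : ψ p ≤ 1 ↔ 1 < ψ q :=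
    hψ.le_iff_lt_of_strictAntiOn_of_strictMonoOn
      ⟨by linarith [hp.1], hp.2.le⟩ ⟨by linarith [hq.1], hq.2.le⟩ hpq
      (strictAntiOn_hingeCondRisk hp.1) (strictMonoOn_hingeCondRisk hp.2)
      (strictAntiOn_hingeCondRisk hq.1) (strictMonoOn_hingeCondRisk hq.2)
  have h₁₂ : ψ (3 / 5) ≤ 1 ↔ 1 < ψ (7 / 10) :=
    opposite_sides (by norm_num) (by norm_num) (by norm_num)
  have h₁₃ : ψ (3 / 5) ≤ 1 ↔ 1 < ψ (4 / 5) :=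
    opposite_sides (by norm_num) (by norm_num) (by norm_num)
  have h₂₃ : ψ (7 / 10) ≤ 1 ↔ 1 < ψ (4 / 5) :=
    opposite_sides (by norm_num) (by norm_num) (by norm_num)
  rw [← not_le] at h₁₂ h₁₃ h₂₃
  tauto

/-- The hinge loss is not suitable for class probability estimation: there is no link
function `ψ : [0,1] → ℝ` such that the composite loss `(l,ψ)` is strictly proper
(`v*_ψ(η) = {η}` for all `η ∈ [0,1]`) and non-degenerate (`Im ψ ∩ v*(η) ≠ ∅` for all
`η ∈ [0,1]`). -/
theorem hinge_no_strictly_proper_link :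
    ¬ ∃ ψ : ℝ → ℝ,
      (∀ η ∈ Icc (0:ℝ) 1,
        {q ∈ Icc (0:ℝ) 1 | ∀ q' ∈ Icc (0:ℝ) 1,
          hingeCondRisk η (ψ q) ≤ hingeCondRisk η (ψ q')} = {η}) ∧
      (∀ η ∈ Icc (0:ℝ) 1, (ψ '' Icc (0:ℝ) 1 ∩ hingeMinimizerSet η).Nonempty) := by
  rintro ⟨ψ, hψ, -⟩
  exact hinge_no_strictly_proper_link_general ⟨ψ, hψ⟩
end

section
/- Let l be the squared hinge loss on V = ℝ, given by l(y,v) = max(0, 1 − yv)². Then the set v*(η) of minimizers of v ↦ L(η,v) = η·max(0,1−v)² + (1−η)·max(0,1+v)² over ℝ is: v*(η) = {2η − 1} for η ∈ (0,1), v*(1) = [1,∞), and v*(0) = (−∞,−1]. Moreover, with the link ψ(η) = 2η − 1, the composite loss (l,ψ) is a natural CPE loss: it is strictly proper, non-degenerate, and the sets v*(η), η ∈ [0,1], disjointly cover ℝ; the inverse link is ψ⁻¹(v) = T((v+1)/2), where T truncates to [0,1]. -/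
open Set

/-- The conditional risk of the squared hinge loss `l(y,v) = max(0, 1 − yv)²`:
`L(η,v) = η·max(0,1−v)² + (1−η)·max(0,1+v)²`. -/
def sqHingeCondRisk (η v : ℝ) : ℝ :=
  η * (max 0 (1 - v))^2 + (1 - η) * (max 0 (1 + v))^2

/-- `v*(η)`: the set of minimizers of `v ↦ L(η,v)` over `ℝ` for the squared hinge loss. -/
def sqHingeMinimizerSet (η : ℝ) : Set ℝ :=
  {v | ∀ w, sqHingeCondRisk η v ≤ sqHingeCondRisk η w}

/-!
Let `T v` be the truncation of `(v + 1) / 2` to `[0, 1]`, and let `s v` be the sum of the unsquared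
hinge losses of the two labels. Then `T v = max 0 (1 + v) / s v`, and completing the square gives
`L(η, v) = (s v)² * (η * (1 - η) + (η - T v)²)`. Since `2 ≤ s v`, this is at least
`4 * (η * (1 - η) + (η - T v)²)` for `η ∈ [0, 1]`, and if `η = T v` it equals `4 * η * (1 - η)`,
because `s v = 2` unless `T v` is `0` or `1`. Hence the minimizer sets are the fibres of `T`.
-/

/-- The inverse link `ψ⁻¹` of the squared hinge loss: the truncation of `(v + 1) / 2` to
`[0, 1]`. -/
noncomputable def sqHingeInvLink (v : ℝ) : ℝ :=
  max 0 (min 1 ((v + 1) / 2))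

/-- The sum over both labels `y` of the (unsquared) hinge losses `max 0 (1 - y * v)`; the common
scale of the two losses in the conditional risk. -/
def hingeLossSum (v : ℝ) : ℝ :=
  max 0 (1 - v) + max 0 (1 + v)

section

variable {η v : ℝ}

lemma sqHingeInvLink_mem_Icc (v : ℝ) : sqHingeInvLink v ∈ Icc (0 : ℝ) 1 :=
  ⟨le_max_left _ _, max_le zero_le_one (min_le_left _ _)⟩

lemma sqHingeInvLink_link (hη : η ∈ Icc (0 : ℝ) 1) : sqHingeInvLink (2 * η - 1) = η := by
  rw [sqHingeInvLink, show (2 * η - 1 + 1) / 2 = η by ring, min_eq_right hη.2, max_eq_right hη.1]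

lemma sqHingeInvLink_eq_zero_iff : sqHingeInvLink v = 0 ↔ v ≤ -1 := by
  grind [sqHingeInvLink]

lemma sqHingeInvLink_eq_one_iff : sqHingeInvLink v = 1 ↔ 1 ≤ v := by
  grind [sqHingeInvLink]

lemma sqHingeInvLink_eq_iff_of_mem_Ioo (hη : η ∈ Ioo (0 : ℝ) 1) :
    sqHingeInvLink v = η ↔ v = 2 * η - 1 := by
  grind [sqHingeInvLink]

lemma two_le_hingeLossSum (v : ℝ) : 2 ≤ hingeLossSum v :=
  calc
    2 = (1 - v) + (1 + v) := by ring
    _ ≤ hingeLossSum v := add_le_add (le_max_right _ _) (le_max_right _ _)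

lemma hingeLossSum_eq_two (hv : v ∈ Icc (-1 : ℝ) 1) : hingeLossSum v = 2 := by
  rw [hingeLossSum, max_eq_right (by linarith [hv.2]), max_eq_right (by linarith [hv.1])]
  ring

lemma sqHingeInvLink_mul_hingeLossSum (v : ℝ) :
    sqHingeInvLink v * hingeLossSum v = max 0 (1 + v) := by
  rcases le_total v (-1) with hv | hv
  · rw [sqHingeInvLink_eq_zero_iff.2 hv, zero_mul, max_eq_left (by linarith)]
  rcases le_total 1 v with hv' | hv'
  · rw [sqHingeInvLink_eq_one_iff.2 hv', one_mul, hingeLossSum, max_eq_left (by linarith), zero_add]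
  · rw [hingeLossSum_eq_two ⟨hv, hv'⟩, sqHingeInvLink, min_eq_right (by linarith),
      max_eq_right (by linarith), max_eq_right (by linarith)]
    ring

lemma one_sub_sqHingeInvLink_mul_hingeLossSum (v : ℝ) :
    (1 - sqHingeInvLink v) * hingeLossSum v = max 0 (1 - v) := by
  rw [one_sub_mul, sqHingeInvLink_mul_hingeLossSum, hingeLossSum, add_sub_cancel_right]

lemma sqHingeCondRisk_eq (η v : ℝ) :
    sqHingeCondRisk η v =
      hingeLossSum v ^ 2 * (η * (1 - η) + (η - sqHingeInvLink v) ^ 2) := by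
  rw [sqHingeCondRisk, ← one_sub_sqHingeInvLink_mul_hingeLossSum,
    ← sqHingeInvLink_mul_hingeLossSum]
  ring

lemma four_mul_le_sqHingeCondRisk (hη : η ∈ Icc (0 : ℝ) 1) (v : ℝ) :
    4 * (η * (1 - η) + (η - sqHingeInvLink v) ^ 2) ≤ sqHingeCondRisk η v := by
  have hfactor : 0 ≤ η * (1 - η) + (η - sqHingeInvLink v) ^ 2 :=
    add_nonneg (mul_nonneg hη.1 (sub_nonneg.2 hη.2)) (sq_nonneg _)
  have hscale : 4 ≤ hingeLossSum v ^ 2 := by nlinarith only [two_le_hingeLossSum v]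
  rw [sqHingeCondRisk_eq]
  exact mul_le_mul_of_nonneg_right hscale hfactor

lemma sqHingeCondRisk_sqHingeInvLink (v : ℝ) :
    sqHingeCondRisk (sqHingeInvLink v) v = 4 * (sqHingeInvLink v * (1 - sqHingeInvLink v)) := by
  rw [sqHingeCondRisk_eq]
  rcases le_total v (-1) with hv | hv
  · simp [sqHingeInvLink_eq_zero_iff.2 hv]
  rcases le_total 1 v with hv' | hv'
  · simp [sqHingeInvLink_eq_one_iff.2 hv']
  · rw [hingeLossSum_eq_two ⟨hv, hv'⟩]
    ring

lemma sqHingeInvLink_eq_of_sqHingeCondRisk_le (hη : η ∈ Icc (0 : ℝ) 1)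
    (hle : sqHingeCondRisk η v ≤ sqHingeCondRisk η (2 * η - 1)) : sqHingeInvLink v = η := by
  have hmin : sqHingeCondRisk η (2 * η - 1) = 4 * (η * (1 - η)) := by
    simpa only [sqHingeInvLink_link hη] using sqHingeCondRisk_sqHingeInvLink (2 * η - 1)
  have hsq : (η - sqHingeInvLink v) ^ 2 ≤ 0 := by
    linarith [four_mul_le_sqHingeCondRisk hη v]
  exact (sub_eq_zero.1 (sq_nonpos_iff _ |>.1 hsq)).symm

lemma mem_sqHingeMinimizerSet_sqHingeInvLink (v : ℝ) :
    v ∈ sqHingeMinimizerSet (sqHingeInvLink v) := fun w ↦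
  calc
    sqHingeCondRisk (sqHingeInvLink v) v
      = 4 * (sqHingeInvLink v * (1 - sqHingeInvLink v)) := sqHingeCondRisk_sqHingeInvLink v
    _ ≤ 4 * (sqHingeInvLink v * (1 - sqHingeInvLink v) +
          (sqHingeInvLink v - sqHingeInvLink w) ^ 2) := by
      linarith [sq_nonneg (sqHingeInvLink v - sqHingeInvLink w)]
    _ ≤ sqHingeCondRisk (sqHingeInvLink v) w :=
      four_mul_le_sqHingeCondRisk (sqHingeInvLink_mem_Icc v) w

lemma mem_sqHingeMinimizerSet_iff (hη : η ∈ Icc (0 : ℝ) 1) :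
    v ∈ sqHingeMinimizerSet η ↔ sqHingeInvLink v = η := by
  refine ⟨fun hv ↦ sqHingeInvLink_eq_of_sqHingeCondRisk_le hη (hv _), ?_⟩
  rintro rfl
  exact mem_sqHingeMinimizerSet_sqHingeInvLink v

lemma link_mem_sqHingeMinimizerSet (hη : η ∈ Icc (0 : ℝ) 1) :
    2 * η - 1 ∈ sqHingeMinimizerSet η :=
  (mem_sqHingeMinimizerSet_iff hη).2 (sqHingeInvLink_link hη)

lemma argmin_sqHingeCondRisk_link_eq_singleton (hη : η ∈ Icc (0 : ℝ) 1) :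
    {q ∈ Icc (0 : ℝ) 1 | ∀ q' ∈ Icc (0 : ℝ) 1,
      sqHingeCondRisk η (2 * q - 1) ≤ sqHingeCondRisk η (2 * q' - 1)} = {η} := by
  refine eq_singleton_iff_unique_mem.2
    ⟨⟨hη, fun _ _ ↦ link_mem_sqHingeMinimizerSet hη _⟩, fun q ⟨hq, hmin⟩ ↦ ?_⟩
  rw [← sqHingeInvLink_link hq]
  exact sqHingeInvLink_eq_of_sqHingeCondRisk_le hη (hmin η hη)

end

/-- The squared hinge loss on `V = ℝ` with link `ψ(η) = 2η − 1` is a natural CPE loss: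
`v*(η) = {2η−1}` for `η ∈ (0,1)`, `v*(1) = [1,∞)`, `v*(0) = (−∞,−1]`, the composite loss is
strictly proper and non-degenerate, the sets `v*(η)` disjointly cover `ℝ`, and the inverse
link is `ψ⁻¹(v) = T((v+1)/2)` where `T` truncates to `[0,1]`. -/
theorem squared_hinge_loss_natural_CPE :
    -- the minimizer sets
    (∀ η ∈ Ioo (0:ℝ) 1, sqHingeMinimizerSet η = {2 * η - 1}) ∧
    sqHingeMinimizerSet 1 = Ici 1 ∧
    sqHingeMinimizerSet 0 = Iic (-1) ∧
    -- strictly proper: v*_ψ(η) = {η}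
    (∀ η ∈ Icc (0:ℝ) 1,
      {q ∈ Icc (0:ℝ) 1 | ∀ q' ∈ Icc (0:ℝ) 1,
        sqHingeCondRisk η (2 * q - 1) ≤ sqHingeCondRisk η (2 * q' - 1)} = {η}) ∧
    -- non-degenerate: Im ψ ∩ v*(η) ≠ ∅
    (∀ η ∈ Icc (0:ℝ) 1,
      ((fun q : ℝ => 2 * q - 1) '' Icc (0:ℝ) 1 ∩ sqHingeMinimizerSet η).Nonempty) ∧
    -- the sets v*(η) disjointly cover ℝ
    ((⋃ η ∈ Icc (0:ℝ) 1, sqHingeMinimizerSet η) = univ) ∧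
    (∀ η₁ ∈ Icc (0:ℝ) 1, ∀ η₂ ∈ Icc (0:ℝ) 1, η₁ ≠ η₂ →
      sqHingeMinimizerSet η₁ ∩ sqHingeMinimizerSet η₂ = ∅) ∧
    -- the inverse link is the truncation ψ⁻¹(v) = T((v+1)/2)
    (∀ v : ℝ, ∀ η ∈ Icc (0:ℝ) 1, v ∈ sqHingeMinimizerSet η →
      η = max 0 (min 1 ((v + 1) / 2))) := by
  refine ⟨fun η hη ↦ ?_, ?_, ?_, fun _ ↦ argmin_sqHingeCondRisk_link_eq_singleton,
    fun η hη ↦ ⟨_, mem_image_of_mem _ hη, link_mem_sqHingeMinimizerSet hη⟩, ?_,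
    fun η₁ hη₁ η₂ hη₂ hne ↦ ?_, fun _ _ hη hv ↦ ((mem_sqHingeMinimizerSet_iff hη).1 hv).symm⟩
  · ext v
    exact (mem_sqHingeMinimizerSet_iff (Ioo_subset_Icc_self hη)).trans
      (sqHingeInvLink_eq_iff_of_mem_Ioo hη)
  · ext v
    exact (mem_sqHingeMinimizerSet_iff unitInterval.one_mem).trans sqHingeInvLink_eq_one_iff
  · ext v
    exact (mem_sqHingeMinimizerSet_iff unitInterval.zero_mem).trans sqHingeInvLink_eq_zero_iff
  · exact eq_univ_of_forall fun v ↦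
      mem_biUnion (sqHingeInvLink_mem_Icc v) (mem_sqHingeMinimizerSet_sqHingeInvLink v)
  · refine disjoint_iff_inter_eq_empty.1 (disjoint_left.2 fun v hv₁ hv₂ ↦ hne ?_)
    exact ((mem_sqHingeMinimizerSet_iff hη₁).1 hv₁).symm.trans
      ((mem_sqHingeMinimizerSet_iff hη₂).1 hv₂)
end
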